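/- Let μ1, μ2 ∈ P_2(ℝ^d) and θ ∈ S^{d−1}. Then the set of Wasserstein means M(Q_θ#μ1, Q_θ#μ2) is a singleton {μ_θ[μ1,μ2]}, where μ_θ[μ1,μ2] is the pushforward of Lebesgue measure on [0,1] by the map t ↦ ((1/2)F_{ν1}^{[-1]}(t) + (1/2)F_{ν2}^{[-1]}(t))·θ, with ν_i = P_θ#μ_i for i = 1,2. -/

import Mathlib

open MeasureTheory Filter Topology ProbabilityTheory
open scoped ENNReal RealInnerProductSpace Classical

noncomputable section

/-- Euclidean space ℝ^d. -/
abbrev Euc (d : ℕ) : Type := EuclideanSpace ℝ (Fin d)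

/-- `P2` : Borel probability measures with finite second moment. -/
def P2 {E : Type*} [NormedAddCommGroup E] [MeasurableSpace E] : Set (Measure E) :=
  {μ | IsProbabilityMeasure μ ∧ Integrable (fun x => ‖x‖ ^ 2) μ}

/-- Couplings between two measures. -/
def Coupling {E F : Type*} [MeasurableSpace E] [MeasurableSpace F]
    (μ : Measure E) (ν : Measure F) : Set (Measure (E × F)) :=
  {π | IsProbabilityMeasure π ∧ π.map Prod.fst = μ ∧ π.map Prod.snd = ν}

/-- Quadratic transport cost of a plan. -/
def tCost {E : Type*} [NormedAddCommGroup E] [MeasurableSpace E]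
    (π : Measure (E × E)) : ℝ :=
  ∫ p, ‖p.1 - p.2‖ ^ 2 ∂π

/-- Squared 2-Wasserstein distance. -/
def W2sq {E : Type*} [NormedAddCommGroup E] [MeasurableSpace E] (μ ν : Measure E) : ℝ :=
  sInf (tCost '' Coupling μ ν)

/-- 2-Wasserstein distance. -/
def W2 {E : Type*} [NormedAddCommGroup E] [MeasurableSpace E] (μ ν : Measure E) : ℝ :=
  Real.sqrt (W2sq μ ν)

/-- Optimal transport plans for the quadratic cost. -/
def OptPlan {E : Type*} [NormedAddCommGroup E] [MeasurableSpace E]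
    (μ ν : Measure E) : Set (Measure (E × E)) :=
  {π | π ∈ Coupling μ ν ∧ tCost π = W2sq μ ν}

/-- `Gamma ν μ1 μ2` : probability measures on `E × E × E` whose (1,2)-marginal is an optimal
plan between `ν` and `μ1` and whose (1,3)-marginal is an optimal plan between `ν` and `μ2`. -/
def Gamma {E : Type*} [NormedAddCommGroup E] [MeasurableSpace E]
    (ν μ1 μ2 : Measure E) : Set (Measure (E × E × E)) :=
  {ρ | IsProbabilityMeasure ρ ∧
    ρ.map (fun p => (p.1, p.2.1)) ∈ OptPlan ν μ1 ∧
    ρ.map (fun p => (p.1, p.2.2)) ∈ OptPlan ν μ2}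

/-- Cost `∫ ‖x1 − x2‖² dρ(y, x1, x2)` of a 3-plan. -/
def pivotCost {E : Type*} [NormedAddCommGroup E] [MeasurableSpace E]
    (ρ : Measure (E × E × E)) : ℝ :=
  ∫ p, ‖p.2.1 - p.2.2‖ ^ 2 ∂ρ

/-- Squared ν-based Wasserstein discrepancy. -/
def Wnusq {E : Type*} [NormedAddCommGroup E] [MeasurableSpace E]
    (ν μ1 μ2 : Measure E) : ℝ :=
  sInf (pivotCost '' Gamma ν μ1 μ2)

/-- ν-based Wasserstein discrepancy. -/
def Wnu {E : Type*} [NormedAddCommGroup E] [MeasurableSpace E]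
    (ν μ1 μ2 : Measure E) : ℝ :=
  Real.sqrt (Wnusq ν μ1 μ2)

/-- Weak convergence of a sequence of measures (against bounded continuous functions). -/
def WeakConv {E : Type*} [MeasurableSpace E] [TopologicalSpace E]
    (μs : ℕ → Measure E) (μ : Measure E) : Prop :=
  ∀ f : BoundedContinuousFunction E ℝ,
    Tendsto (fun n => ∫ x, f x ∂(μs n)) atTop (𝓝 (∫ x, f x ∂μ))

/-- Quantile function (pseudo-inverse c.d.f.) of a measure on ℝ. -/
def quantile (ν : Measure ℝ) (t : ℝ) : ℝ :=
  sInf {s : ℝ | ENNReal.ofReal t ≤ ν (Set.Iic s)}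

/-- Pushforward of `μ` by the projection `P_θ : x ↦ ⟪θ, x⟫`. -/
def projLine {d : ℕ} (θ : Euc d) (μ : Measure (Euc d)) : Measure ℝ :=
  μ.map (fun x => ⟪θ, x⟫)

/-- `μ_θ[μ1, μ2]` : the (unique) Wasserstein mean of `Q_θ#μ1` and `Q_θ#μ2`, given by the
explicit quantile formula `[(½ F_{ν1}^{[-1]} + ½ F_{ν2}^{[-1]})·θ]#L_{[0,1]}`. -/
def pivotMiddle {d : ℕ} (θ : Euc d) (μ1 μ2 : Measure (Euc d)) : Measure (Euc d) :=
  (volume.restrict (Set.Icc (0 : ℝ) 1)).map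
    (fun t => ((1 / 2) * quantile (projLine θ μ1) t
      + (1 / 2) * quantile (projLine θ μ2) t) • θ)

/-- Squared Pivot Sliced discrepancy. -/
def PSsq {d : ℕ} (θ : Euc d) (μ1 μ2 : Measure (Euc d)) : ℝ :=
  Wnusq (pivotMiddle θ μ1 μ2) μ1 μ2

/-- Pivot Sliced discrepancy. -/
def PS {d : ℕ} (θ : Euc d) (μ1 μ2 : Measure (Euc d)) : ℝ :=
  Real.sqrt (PSsq θ μ1 μ2)

/-- `π_θ[μ1, μ2]` : the unique optimal 1D plan between `P_θ#μ1` and `P_θ#μ2`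
(co-monotone quantile coupling). -/
def piTheta {d : ℕ} (θ : Euc d) (μ1 μ2 : Measure (Euc d)) : Measure (ℝ × ℝ) :=
  (volume.restrict (Set.Icc (0 : ℝ) 1)).map
    (fun t => (quantile (projLine θ μ1) t, quantile (projLine θ μ2) t))

/-- `Ω_θ(μ1, μ2)` : couplings of `μ1, μ2` whose projection by `(P_θ, P_θ)` is `π_θ[μ1, μ2]`. -/
def OmegaTheta {d : ℕ} (θ : Euc d) (μ1 μ2 : Measure (Euc d)) :
    Set (Measure (Euc d × Euc d)) :=
  {ω | ω ∈ Coupling μ1 μ2 ∧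
    ω.map (fun p => (⟪θ, p.1⟫, ⟪θ, p.2⟫)) = piTheta θ μ1 μ2}

/-- Squared constrained Wasserstein discrepancy `CW_θ²`. -/
def CWsq {d : ℕ} (θ : Euc d) (μ1 μ2 : Measure (Euc d)) : ℝ :=
  sInf (tCost '' OmegaTheta θ μ1 μ2)

/-- Wasserstein means: minimisers of `μ ↦ W₂²(μ1, μ) + W₂²(μ, μ2)` over `P2`. -/
def WMean {d : ℕ} (μ1 μ2 : Measure (Euc d)) : Set (Measure (Euc d)) :=
  {μ | μ ∈ (P2 : Set (Measure (Euc d))) ∧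
    ∀ μ' ∈ (P2 : Set (Measure (Euc d))),
      W2sq μ1 μ + W2sq μ μ2 ≤ W2sq μ1 μ' + W2sq μ' μ2}

/-- Uniform empirical measure `1/n ∑ δ_{x_i}`. -/
def empMeasure {d n : ℕ} (x : Fin n → Euc d) : Measure (Euc d) :=
  (n : ℝ≥0∞)⁻¹ • ∑ i, Measure.dirac (x i)

/-! Let `m` be the average of the quantile functions of `ν₁` and `ν₂`. For every candidate `μ`, with
projection `ρ` to the line `ℝθ`, Pythagoras bounds each squared distance from `μ` to a measure on
the line below by the distance from `ρ` plus the mean squared distance of `μ` to the line. On the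
line, quantile functions embed measures isometrically into `L²([0, 1])`, where the parallelogram
identity shows that the objective exceeds `½ W₂²(ν₁, ν₂)` by at least
`2 ‖F_ρ^{[-1]} - m‖² + 2 ∫ dist(y, ℝθ)² dμ(y)`. The law of `m • θ` attains `½ W₂²(ν₁, ν₂)`, and
both error terms vanish only for that law. -/

/-! ### Measures with finite second moment -/

section SecondMoment

variable {Ω E : Type*} [MeasurableSpace Ω] [NormedAddCommGroup E] [MeasurableSpace E]
  [BorelSpace E] [SecondCountableTopology E]

lemma map_mem_P2_iff_memLp {P : Measure Ω} [IsProbabilityMeasure P] {X : Ω → E}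
    (hX : AEMeasurable X P) : P.map X ∈ P2 ↔ MemLp X 2 P := by
  have hprob : IsProbabilityMeasure (P.map X) := Measure.isProbabilityMeasure_map hX
  rw [memLp_two_iff_integrable_sq_norm hX.aestronglyMeasurable]
  refine (and_iff_right hprob).trans ?_
  rw [integrable_map_measure (by fun_prop) hX]
  rfl

lemma memLp_id_of_mem_P2 {μ : Measure E} (hμ : μ ∈ P2) : MemLp id 2 μ :=
  (memLp_two_iff_integrable_sq_norm (by fun_prop)).2 hμ.2

variable [InnerProductSpace ℝ E]

lemma map_inner_mem_P2 {μ : Measure E} (hμ : μ ∈ P2) (θ : E) :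
    μ.map (fun x => ⟪θ, x⟫) ∈ P2 := by
  have := hμ.1
  exact (map_mem_P2_iff_memLp (by fun_prop)).2 ((memLp_id_of_mem_P2 hμ).const_inner θ)

lemma map_smul_mem_P2 {ν : Measure ℝ} (hν : ν ∈ P2) (θ : E) : ν.map (fun c => c • θ) ∈ P2 := by
  have := hν.1
  refine (map_mem_P2_iff_memLp (by fun_prop)).2 ?_
  exact (memLp_top_const θ).smul (memLp_id_of_mem_P2 hν)

end SecondMoment

/-! ### Couplings and the quadratic transport cost -/

section Coupling

variable {Ω E F E' F' : Type*} [MeasurableSpace Ω] [MeasurableSpace E] [MeasurableSpace F]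
  [MeasurableSpace E'] [MeasurableSpace F'] {μ : Measure E} {ν : Measure F}

lemma map_prodMk_mem_Coupling {P : Measure Ω} [IsProbabilityMeasure P] {X : Ω → E} {Y : Ω → F}
    (hX : AEMeasurable X P) (hY : AEMeasurable Y P) :
    P.map (fun ω => (X ω, Y ω)) ∈ Coupling (P.map X) (P.map Y) := by
  have hXY := hX.prodMk hY
  refine ⟨Measure.isProbabilityMeasure_map hXY, ?_, ?_⟩
  · exact AEMeasurable.map_map_of_aemeasurable measurable_fst.aemeasurable hXY
  · exact AEMeasurable.map_map_of_aemeasurable measurable_snd.aemeasurable hXY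

lemma map_prodMap_mem_Coupling {π : Measure (E × F)} (hπ : π ∈ Coupling μ ν) {f : E → E'}
    {g : F → F'} (hf : Measurable f) (hg : Measurable g) :
    π.map (Prod.map f g) ∈ Coupling (μ.map f) (ν.map g) := by
  obtain ⟨hprob, rfl, rfl⟩ := hπ
  rw [Measure.map_map hf measurable_fst, Measure.map_map hg measurable_snd]
  exact map_prodMk_mem_Coupling (hf.comp measurable_fst).aemeasurable
    (hg.comp measurable_snd).aemeasurable

lemma map_swap_mem_Coupling {π : Measure (E × F)} (hπ : π ∈ Coupling μ ν) :
    π.map Prod.swap ∈ Coupling ν μ := by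
  obtain ⟨hprob, rfl, rfl⟩ := hπ
  exact map_prodMk_mem_Coupling measurable_snd.aemeasurable measurable_fst.aemeasurable

lemma prod_mem_Coupling [IsProbabilityMeasure μ] [IsProbabilityMeasure ν] :
    μ.prod ν ∈ Coupling μ ν :=
  ⟨inferInstance, by simp, by simp⟩

end Coupling

section Wasserstein

variable {Ω E : Type*} [MeasurableSpace Ω] [NormedAddCommGroup E] [MeasurableSpace E]
  {μ ν : Measure E} {π : Measure (E × E)}

lemma tCost_nonneg (π : Measure (E × E)) : 0 ≤ tCost π :=
  integral_nonneg fun _ => by positivity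

lemma tCost_map_swap (π : Measure (E × E)) : tCost (π.map Prod.swap) = tCost π := by
  refine (integral_map_equiv MeasurableEquiv.prodComm _).trans ?_
  exact integral_congr_ae (ae_of_all _ fun p => congrArg (· ^ 2) (norm_sub_rev p.2 p.1))

lemma W2sq_le_tCost (hπ : π ∈ Coupling μ ν) : W2sq μ ν ≤ tCost π :=
  csInf_le ⟨0, by rintro _ ⟨π', -, rfl⟩; exact tCost_nonneg π'⟩ ⟨π, hπ, rfl⟩

lemma le_W2sq [IsProbabilityMeasure μ] [IsProbabilityMeasure ν] {c : ℝ}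
    (h : ∀ π ∈ Coupling μ ν, c ≤ tCost π) : c ≤ W2sq μ ν :=
  le_csInf ⟨_, _, prod_mem_Coupling, rfl⟩ (by rintro _ ⟨π, hπ, rfl⟩; exact h π hπ)

lemma W2sq_comm (μ ν : Measure E) : W2sq μ ν = W2sq ν μ := by
  have image_subset (μ ν : Measure E) : tCost '' Coupling μ ν ⊆ tCost '' Coupling ν μ := by
    rintro _ ⟨π, hπ, rfl⟩
    exact ⟨_, map_swap_mem_Coupling hπ, tCost_map_swap π⟩
  exact congrArg sInf ((image_subset μ ν).antisymm (image_subset ν μ))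

variable [BorelSpace E] [SecondCountableTopology E]

lemma integrable_tCost (hμ : μ ∈ P2) (hν : ν ∈ P2) (hπ : π ∈ Coupling μ ν) :
    Integrable (fun p => ‖p.1 - p.2‖ ^ 2) π := by
  obtain ⟨hprob, rfl, rfl⟩ := hπ
  have hfst := (map_mem_P2_iff_memLp measurable_fst.aemeasurable).1 hμ
  have hsnd := (map_mem_P2_iff_memLp measurable_snd.aemeasurable).1 hν
  exact (hfst.sub hsnd).integrable_norm_pow two_ne_zero

lemma tCost_map_prodMk {P : Measure Ω} {X Y : Ω → E} (hX : AEMeasurable X P)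
    (hY : AEMeasurable Y P) :
    tCost (P.map fun ω => (X ω, Y ω)) = ∫ ω, ‖X ω - Y ω‖ ^ 2 ∂P :=
  integral_map (hX.prodMk hY) (by fun_prop)

lemma W2sq_map_map_le {P : Measure Ω} [IsProbabilityMeasure P] {X Y : Ω → E}
    (hX : AEMeasurable X P) (hY : AEMeasurable Y P) :
    W2sq (P.map X) (P.map Y) ≤ ∫ ω, ‖X ω - Y ω‖ ^ 2 ∂P :=
  (W2sq_le_tCost (map_prodMk_mem_Coupling hX hY)).trans_eq (tCost_map_prodMk hX hY)

lemma W2sq_map_midpoint_add_le [NormedSpace ℝ E] {P : Measure Ω} [IsProbabilityMeasure P]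
    {X Y : Ω → E} (hX : AEMeasurable X P) (hY : AEMeasurable Y P) :
    W2sq (P.map X) (P.map fun ω => midpoint ℝ (X ω) (Y ω))
        + W2sq (P.map fun ω => midpoint ℝ (X ω) (Y ω)) (P.map Y)
      ≤ 1 / 2 * ∫ ω, ‖X ω - Y ω‖ ^ 2 ∂P := by
  have hM : AEMeasurable (fun ω => midpoint ℝ (X ω) (Y ω)) P := by
    simp only [midpoint_eq_smul_add]
    exact (hX.add hY).const_smul _
  have left_cost : ∫ ω, ‖X ω - midpoint ℝ (X ω) (Y ω)‖ ^ 2 ∂P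
      = 1 / 4 * ∫ ω, ‖X ω - Y ω‖ ^ 2 ∂P := by
    simp_rw [← integral_const_mul, ← dist_eq_norm, dist_left_midpoint, Real.norm_ofNat, mul_pow]
    norm_num
  have right_cost : ∫ ω, ‖midpoint ℝ (X ω) (Y ω) - Y ω‖ ^ 2 ∂P
      = 1 / 4 * ∫ ω, ‖X ω - Y ω‖ ^ 2 ∂P := by
    simp_rw [← integral_const_mul, ← dist_eq_norm, dist_midpoint_right, Real.norm_ofNat, mul_pow]
    norm_num
  linarith [W2sq_map_map_le hX hM, W2sq_map_map_le hM hY]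

end Wasserstein

/-! ### Quantile functions -/

/-- Lebesgue measure on `[0, 1]`, the probability space on which quantile functions live. -/
abbrev unitLebesgue : Measure ℝ := volume.restrict (Set.Icc 0 1)

instance isProbabilityMeasure_unitLebesgue : IsProbabilityMeasure unitLebesgue :=
  ⟨by simp⟩

lemma unitLebesgue_eq_restrict_Ioo : unitLebesgue = volume.restrict (Set.Ioo 0 1) :=
  restrict_Ioo_eq_restrict_Icc.symm

lemma ae_unitLebesgue_mem_Ioo : ∀ᵐ t ∂unitLebesgue, t ∈ Set.Ioo (0 : ℝ) 1 := by
  rw [unitLebesgue_eq_restrict_Ioo]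
  exact ae_restrict_mem measurableSet_Ioo

lemma unitLebesgue_Iic {c : ℝ} (hc : c ≤ 1) :
    unitLebesgue (Set.Iic c) = ENNReal.ofReal c := by
  have : Set.Iic c ∩ Set.Icc 0 1 = Set.Icc 0 c := by
    ext t
    simp only [Set.mem_inter_iff, Set.mem_Iic, Set.mem_Icc]
    grind
  rw [Measure.restrict_apply measurableSet_Iic, this, Real.volume_Icc, sub_zero]

section Quantile

variable (ν : Measure ℝ) [IsProbabilityMeasure ν] {t : ℝ}

lemma quantile_eq_sInf_cdf (t : ℝ) : quantile ν t = sInf {s | t ≤ cdf ν s} := by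
  simp_rw [quantile, ← ofReal_cdf, ENNReal.ofReal_le_ofReal_iff (cdf_nonneg _ _)]

/-- At `t = 0` and `t = 1` the infimum defining `quantile` may be a junk value. -/
lemma quantile_le_iff_le_cdf (ht : t ∈ Set.Ioo (0 : ℝ) 1) {s : ℝ} :
    quantile ν t ≤ s ↔ t ≤ cdf ν s := by
  have hne : {s | t ≤ cdf ν s}.Nonempty :=
    ((tendsto_cdf_atTop ν).eventually_const_le ht.2).exists
  obtain ⟨b, hb⟩ := ((tendsto_cdf_atBot ν).eventually_lt_const ht.1).exists
  have hbdd : BddBelow {s | t ≤ cdf ν s} :=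
    ⟨b, fun s hs => ((monotone_cdf ν).reflect_lt (hb.trans_le hs)).le⟩
  rw [quantile_eq_sInf_cdf]
  refine ⟨fun h => ?_, fun h => csInf_le hbdd h⟩
  rw [← (cdf ν).iInf_Ioi_eq s]
  refine le_ciInf fun ⟨s', hs'⟩ => ?_
  obtain ⟨a, ha, has'⟩ := exists_lt_of_csInf_lt hne (h.trans_lt hs')
  exact ha.trans (monotone_cdf ν has'.le)

lemma monotoneOn_quantile : MonotoneOn (quantile ν) (Set.Ioo 0 1) := fun _ ha _ hb hab =>
  (quantile_le_iff_le_cdf ν ha).2 (hab.trans ((quantile_le_iff_le_cdf ν hb).1 le_rfl))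

lemma aemeasurable_quantile : AEMeasurable (quantile ν) unitLebesgue := by
  rw [unitLebesgue_eq_restrict_Ioo]
  exact aemeasurable_restrict_of_monotoneOn measurableSet_Ioo (monotoneOn_quantile ν)

lemma map_quantile : unitLebesgue.map (quantile ν) = ν := by
  have := Measure.isProbabilityMeasure_map (aemeasurable_quantile ν)
  refine Measure.ext_of_Iic _ _ fun s => ?_
  have hpre : (quantile ν ⁻¹' Set.Iic s : Set ℝ) =ᵐ[unitLebesgue] Set.Iic (cdf ν s) := by
    filter_upwards [ae_unitLebesgue_mem_Ioo] with t ht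
    exact propext (quantile_le_iff_le_cdf ν ht)
  rw [Measure.map_apply_of_aemeasurable (aemeasurable_quantile ν) measurableSet_Iic,
    measure_congr hpre, unitLebesgue_Iic (cdf_le_one ν s), ofReal_cdf]

end Quantile

lemma memLp_quantile {ν : Measure ℝ} (hν : ν ∈ P2) : MemLp (quantile ν) 2 unitLebesgue := by
  have := hν.1
  rwa [← map_mem_P2_iff_memLp (aemeasurable_quantile ν), map_quantile]

/-! ### Optimal transport on the line -/

/-- The comonotone coupling of `ν` and `ρ`, which is optimal for the quadratic cost. -/
def quantileCoupling (ν ρ : Measure ℝ) : Measure (ℝ × ℝ) :=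
  unitLebesgue.map fun t => (quantile ν t, quantile ρ t)

section Line

variable {ν ρ : Measure ℝ}

lemma measure_Iic_sub_le_of_mem_Coupling {π : Measure (ℝ × ℝ)} (hπ : π ∈ Coupling ν ρ)
    (a b : ℝ) : ν (Set.Iic a) - ρ (Set.Iic b) ≤ π (Set.Iic a ×ˢ Set.Ioi b) := by
  obtain ⟨-, rfl, rfl⟩ := hπ
  rw [Measure.map_apply measurable_fst measurableSet_Iic,
    Measure.map_apply measurable_snd measurableSet_Iic]
  exact le_measure_sdiff.trans (measure_mono fun p hp => ⟨hp.1, Set.mem_Ioi.2 (not_le.1 hp.2)⟩)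

/-- Layer cake: `(y - x)₊²` is the area of the square `[x, y)²`. -/
lemma lintegral_ofReal_sub_sq (π : Measure (ℝ × ℝ)) [SFinite π] :
    ∫⁻ p, ENNReal.ofReal (p.2 - p.1) ^ 2 ∂π
      = ∫⁻ z : ℝ × ℝ, π (Set.Iic (min z.1 z.2) ×ˢ Set.Ioi (max z.1 z.2)) := by
  let A : Set ((ℝ × ℝ) × (ℝ × ℝ)) :=
    {w | w.1.1 ≤ min w.2.1 w.2.2} ∩ {w | max w.2.1 w.2.2 < w.1.2}
  have hA : MeasurableSet A :=
    (measurableSet_le (by fun_prop) (by fun_prop)).inter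
      (measurableSet_lt (by fun_prop) (by fun_prop))
  have slice_eq_square (p : ℝ × ℝ) :
      Prod.mk p ⁻¹' A = Set.Ico p.1 p.2 ×ˢ Set.Ico p.1 p.2 := by
    ext z
    simp only [A, Set.mem_preimage, Set.mem_inter_iff, Set.mem_ofPred_eq, Set.mem_prod,
      Set.mem_Ico, le_min_iff, max_lt_iff]
    tauto
  calc ∫⁻ p, ENNReal.ofReal (p.2 - p.1) ^ 2 ∂π
      = ∫⁻ p, volume (Prod.mk p ⁻¹' A) ∂π := by
        simp_rw [slice_eq_square, Measure.volume_eq_prod, Measure.prod_prod, Real.volume_Ico, sq]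
    _ = π.prod volume A := (Measure.prod_apply hA).symm
    _ = ∫⁻ z : ℝ × ℝ, π (Set.Iic (min z.1 z.2) ×ˢ Set.Ioi (max z.1 z.2)) :=
        Measure.prod_apply_symm hA

lemma ofReal_sq_sub_eq_add (a b : ℝ) :
    ENNReal.ofReal ((a - b) ^ 2) = ENNReal.ofReal (b - a) ^ 2 + ENNReal.ofReal (a - b) ^ 2 := by
  rcases le_total a b with h | h
  · rw [ENNReal.ofReal_of_nonpos (sub_nonpos.2 h), ← ENNReal.ofReal_pow (sub_nonneg.2 h),
      zero_pow two_ne_zero, add_zero, sub_sq_comm]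
  · rw [ENNReal.ofReal_of_nonpos (sub_nonpos.2 h), ← ENNReal.ofReal_pow (sub_nonneg.2 h),
      zero_pow two_ne_zero, zero_add]

lemma map_swap_quantileCoupling (ν ρ : Measure ℝ) [IsProbabilityMeasure ν]
    [IsProbabilityMeasure ρ] :
    (quantileCoupling ν ρ).map Prod.swap = quantileCoupling ρ ν :=
  AEMeasurable.map_map_of_aemeasurable measurable_swap.aemeasurable
    ((aemeasurable_quantile ν).prodMk (aemeasurable_quantile ρ))

lemma quantileCoupling_mem_Coupling (ν ρ : Measure ℝ) [IsProbabilityMeasure ν]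
    [IsProbabilityMeasure ρ] :
    quantileCoupling ν ρ ∈ Coupling ν ρ := by
  simpa only [map_quantile, quantileCoupling] using
    map_prodMk_mem_Coupling (aemeasurable_quantile ν) (aemeasurable_quantile ρ)

lemma quantileCoupling_Iic_prod_Ioi_le [IsProbabilityMeasure ν] [IsProbabilityMeasure ρ]
    (a b : ℝ) :
    quantileCoupling ν ρ (Set.Iic a ×ˢ Set.Ioi b) ≤ ν (Set.Iic a) - ρ (Set.Iic b) := by
  rw [quantileCoupling, Measure.map_apply_of_aemeasurable
    ((aemeasurable_quantile ν).prodMk (aemeasurable_quantile ρ))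
    (measurableSet_Iic.prod measurableSet_Ioi)]
  calc unitLebesgue _ ≤ unitLebesgue (Set.Ioc (cdf ρ b) (cdf ν a)) := by
        refine measure_mono_ae ?_
        filter_upwards [ae_unitLebesgue_mem_Ioo] with t ht ⟨hνa, hρb⟩
        exact ⟨not_le.1 ((quantile_le_iff_le_cdf ρ ht).not.1 (not_le.2 hρb)),
          (quantile_le_iff_le_cdf ν ht).1 hνa⟩
    _ ≤ volume (Set.Ioc (cdf ρ b) (cdf ν a)) := Measure.restrict_apply_le _ _
    _ = ν (Set.Iic a) - ρ (Set.Iic b) := by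
        rw [Real.volume_Ioc, ENNReal.ofReal_sub _ (cdf_nonneg _ _), ofReal_cdf, ofReal_cdf]

lemma lintegral_ofReal_sub_sq_quantileCoupling_le [IsProbabilityMeasure ν]
    [IsProbabilityMeasure ρ] {π : Measure (ℝ × ℝ)} (hπ : π ∈ Coupling ν ρ) :
    ∫⁻ p, ENNReal.ofReal (p.2 - p.1) ^ 2 ∂quantileCoupling ν ρ
      ≤ ∫⁻ p, ENNReal.ofReal (p.2 - p.1) ^ 2 ∂π := by
  have := hπ.1
  have := (quantileCoupling_mem_Coupling ν ρ).1
  simp_rw [lintegral_ofReal_sub_sq]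
  exact lintegral_mono fun z => (quantileCoupling_Iic_prod_Ioi_le _ _).trans
    (measure_Iic_sub_le_of_mem_Coupling hπ _ _)

lemma lintegral_sq_sub_quantileCoupling_le [IsProbabilityMeasure ν] [IsProbabilityMeasure ρ]
    {π : Measure (ℝ × ℝ)} (hπ : π ∈ Coupling ν ρ) :
    ∫⁻ p, ENNReal.ofReal ((p.1 - p.2) ^ 2) ∂quantileCoupling ν ρ
      ≤ ∫⁻ p, ENNReal.ofReal ((p.1 - p.2) ^ 2) ∂π := by
  have swapped := lintegral_ofReal_sub_sq_quantileCoupling_le (map_swap_mem_Coupling hπ)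
  rw [← map_swap_quantileCoupling, lintegral_map (by fun_prop) measurable_swap,
    lintegral_map (by fun_prop) measurable_swap] at swapped
  simp_rw [ofReal_sq_sub_eq_add]
  rw [lintegral_add_left (by fun_prop), lintegral_add_left (by fun_prop)]
  exact add_le_add (lintegral_ofReal_sub_sq_quantileCoupling_le hπ) swapped

lemma quantileCoupling_mem_OptPlan (hν : ν ∈ P2) (hρ : ρ ∈ P2) :
    quantileCoupling ν ρ ∈ OptPlan ν ρ := by
  have := hν.1
  have := hρ.1
  have hq := quantileCoupling_mem_Coupling ν ρ
  refine ⟨hq, le_antisymm (le_W2sq fun π hπ => ?_) (W2sq_le_tCost hq)⟩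
  have cost_le := lintegral_sq_sub_quantileCoupling_le hπ
  simp_rw [← sq_abs (_ - _), ← Real.norm_eq_abs] at cost_le
  rw [← ofReal_integral_eq_lintegral_ofReal (integrable_tCost hν hρ hq)
      (ae_of_all _ fun _ => by positivity),
    ← ofReal_integral_eq_lintegral_ofReal (integrable_tCost hν hρ hπ)
      (ae_of_all _ fun _ => by positivity)] at cost_le
  exact (ENNReal.ofReal_le_ofReal_iff (tCost_nonneg π)).1 cost_le

theorem W2sq_eq_integral_quantile (hν : ν ∈ P2) (hρ : ρ ∈ P2) :
    W2sq ν ρ = ∫ t, (quantile ν t - quantile ρ t) ^ 2 ∂unitLebesgue := by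
  have := hν.1
  have := hρ.1
  rw [← (quantileCoupling_mem_OptPlan hν hρ).2, quantileCoupling,
    tCost_map_prodMk (aemeasurable_quantile ν) (aemeasurable_quantile ρ)]
  simp_rw [Real.norm_eq_abs, sq_abs]

end Line

/-- The average of two quantile functions, that is, the quantile function of the Wasserstein mean
on the line. -/
def quantileMean (ν₁ ν₂ : Measure ℝ) (t : ℝ) : ℝ :=
  (1 / 2) * quantile ν₁ t + (1 / 2) * quantile ν₂ t

section QuantileMean

variable {ν₁ ν₂ : Measure ℝ}

lemma memLp_quantileMean (h₁ : ν₁ ∈ P2) (h₂ : ν₂ ∈ P2) :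
    MemLp (quantileMean ν₁ ν₂) 2 unitLebesgue :=
  ((memLp_quantile h₁).const_mul _).add ((memLp_quantile h₂).const_mul _)

lemma quantileMean_smul_eq_midpoint {E : Type*} [AddCommGroup E] [Module ℝ E] (θ : E) (t : ℝ) :
    quantileMean ν₁ ν₂ t • θ = midpoint ℝ (quantile ν₁ t • θ) (quantile ν₂ t • θ) := by
  rw [quantileMean, midpoint_eq_smul_add, invOf_eq_inv]
  module

lemma W2sq_add_W2sq_eq {ρ : Measure ℝ} (h₁ : ν₁ ∈ P2) (h₂ : ν₂ ∈ P2) (hρ : ρ ∈ P2) :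
    W2sq ν₁ ρ + W2sq ρ ν₂ = 1 / 2 * W2sq ν₁ ν₂
      + 2 * ∫ t, (quantile ρ t - quantileMean ν₁ ν₂ t) ^ 2 ∂unitLebesgue := by
  have hq₁ := memLp_quantile h₁
  have hq₂ := memLp_quantile h₂
  have hq := memLp_quantile hρ
  have integrable_sq_sub {f g : ℝ → ℝ} (hf : MemLp f 2 unitLebesgue)
      (hg : MemLp g 2 unitLebesgue) : Integrable (fun t => (f t - g t) ^ 2) unitLebesgue :=
    (hf.sub hg).integrable_sq
  rw [W2sq_eq_integral_quantile h₁ hρ, W2sq_eq_integral_quantile hρ h₂,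
    W2sq_eq_integral_quantile h₁ h₂, ← integral_const_mul, ← integral_const_mul,
    ← integral_add (integrable_sq_sub hq₁ hq) (integrable_sq_sub hq hq₂),
    ← integral_add ((integrable_sq_sub hq₁ hq₂).const_mul _)
      ((integrable_sq_sub hq (memLp_quantileMean h₁ h₂)).const_mul _)]
  congr 1 with t
  simp only [quantileMean]
  ring

end QuantileMean

/-! ### Projection to a line -/

section Projection

variable {E : Type*} [NormedAddCommGroup E] [InnerProductSpace ℝ E] {θ : E}

lemma inner_smul_self_of_norm_eq_one (hθ : ‖θ‖ = 1) (c : ℝ) : ⟪θ, c • θ⟫ = c := by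
  rw [real_inner_smul_right, real_inner_self_eq_norm_sq, hθ, one_pow, mul_one]

lemma norm_smul_sub_sq_of_norm_eq_one (hθ : ‖θ‖ = 1) (c : ℝ) (y : E) :
    ‖c • θ - y‖ ^ 2 = ‖c - ⟪θ, y⟫‖ ^ 2 + ‖y - ⟪θ, y⟫ • θ‖ ^ 2 := by
  simp only [norm_sub_sq_real, norm_smul, hθ, real_inner_smul_left, real_inner_smul_right,
    real_inner_comm θ y, Real.norm_eq_abs, mul_one, sq_abs]
  ring

variable [MeasurableSpace E] [BorelSpace E]

lemma map_quantile_smul (ν : Measure ℝ) [IsProbabilityMeasure ν] (θ : E) :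
    unitLebesgue.map (fun t => quantile ν t • θ) = ν.map fun c => c • θ := by
  conv_rhs => rw [← map_quantile ν]
  have hsmul : Measurable fun c : ℝ => c • θ := by fun_prop
  exact (AEMeasurable.map_map_of_aemeasurable hsmul.aemeasurable (aemeasurable_quantile ν)).symm

variable [SecondCountableTopology E]

lemma map_inner_smul (θ : E) (μ : Measure E) :
    μ.map (fun x => ⟪θ, x⟫ • θ) = (μ.map fun x => ⟪θ, x⟫).map fun c => c • θ :=
  (Measure.map_map (g := fun c : ℝ => c • θ) (by fun_prop) (by fun_prop)).symm

lemma map_smul_map_inner (hθ : ‖θ‖ = 1) (ν : Measure ℝ) :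
    (ν.map fun c => c • θ).map (fun x => ⟪θ, x⟫) = ν := by
  rw [Measure.map_map (by fun_prop) (by fun_prop)]
  simp only [Function.comp_def, inner_smul_self_of_norm_eq_one hθ, Measure.map_id']

lemma memLp_sub_inner_smul {μ : Measure E} (hμ : μ ∈ P2) (θ : E) :
    MemLp (fun y => y - ⟪θ, y⟫ • θ) 2 μ :=
  have hid := memLp_id_of_mem_P2 hμ
  hid.sub ((memLp_top_const θ).smul (hid.const_inner θ))

lemma map_inner_mem_Coupling (hθ : ‖θ‖ = 1) {ν : Measure ℝ} {μ : Measure E}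
    {π : Measure (E × E)} (hπ : π ∈ Coupling (ν.map fun c => c • θ) μ) :
    π.map (Prod.map (⟪θ, ·⟫) (⟪θ, ·⟫)) ∈ Coupling ν (μ.map fun x => ⟪θ, x⟫) := by
  simpa only [map_smul_map_inner hθ] using
    map_prodMap_mem_Coupling hπ (f := (⟪θ, ·⟫)) (g := (⟪θ, ·⟫)) (by fun_prop) (by fun_prop)

lemma ae_fst_eq_inner_smul (hθ : ‖θ‖ = 1) {ν : Measure ℝ} {μ : Measure E}
    {π : Measure (E × E)} (hπ : π ∈ Coupling (ν.map fun c => c • θ) μ) :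
    ∀ᵐ p ∂π, p.1 = ⟪θ, p.1⟫ • θ := by
  refine ae_of_ae_map (p := fun x => x = ⟪θ, x⟫ • θ) measurable_fst.aemeasurable ?_
  rw [hπ.2.1, ae_map_iff (by fun_prop) (measurableSet_eq_fun (by fun_prop) (by fun_prop))]
  exact ae_of_all _ fun c => by rw [inner_smul_self_of_norm_eq_one hθ]

lemma tCost_eq_tCost_map_inner_add (hθ : ‖θ‖ = 1) {ν : Measure ℝ} {μ : Measure E} (hν : ν ∈ P2)
    (hμ : μ ∈ P2) {π : Measure (E × E)} (hπ : π ∈ Coupling (ν.map fun c => c • θ) μ) :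
    tCost π = tCost (π.map (Prod.map (⟪θ, ·⟫) (⟪θ, ·⟫))) + ∫ y, ‖y - ⟪θ, y⟫ • θ‖ ^ 2 ∂μ := by
  have hproj : Measurable (Prod.map (⟪θ, ·⟫) (⟪θ, ·⟫) : E × E → ℝ × ℝ) := by fun_prop
  have pythagoras : ∀ᵐ p ∂π, ‖p.1 - p.2‖ ^ 2
      = ‖⟪θ, p.1⟫ - ⟪θ, p.2⟫‖ ^ 2 + ‖p.2 - ⟪θ, p.2⟫ • θ‖ ^ 2 := by
    filter_upwards [ae_fst_eq_inner_smul hθ hπ] with p hp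
    rw [← norm_smul_sub_sq_of_norm_eq_one hθ, ← hp]
  have along_integrable : Integrable (fun p : E × E => ‖⟪θ, p.1⟫ - ⟪θ, p.2⟫‖ ^ 2) π :=
    (integrable_tCost hν (map_inner_mem_P2 hμ θ)
      (map_inner_mem_Coupling hθ hπ)).comp_measurable hproj
  have off_integrable : Integrable (fun p : E × E => ‖p.2 - ⟪θ, p.2⟫ • θ‖ ^ 2) π := by
    refine Integrable.comp_measurable (g := fun y => ‖y - ⟪θ, y⟫ • θ‖ ^ 2) ?_ measurable_snd
    rw [hπ.2.2]
    exact (memLp_sub_inner_smul hμ θ).integrable_norm_pow two_ne_zero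
  rw [tCost, integral_congr_ae pythagoras, integral_add along_integrable off_integrable, tCost,
    integral_map hproj.aemeasurable (by fun_prop), ← hπ.2.2,
    integral_map measurable_snd.aemeasurable (by fun_prop)]
  rfl

theorem W2sq_map_inner_add_le (hθ : ‖θ‖ = 1) {ν : Measure ℝ} {μ : Measure E} (hν : ν ∈ P2)
    (hμ : μ ∈ P2) :
    W2sq ν (μ.map fun x => ⟪θ, x⟫) + ∫ y, ‖y - ⟪θ, y⟫ • θ‖ ^ 2 ∂μ
      ≤ W2sq (ν.map fun c => c • θ) μ := by
  have := (map_smul_mem_P2 hν θ).1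
  have := hμ.1
  refine le_W2sq fun π hπ => ?_
  rw [tCost_eq_tCost_map_inner_add hθ hν hμ hπ]
  gcongr
  exact W2sq_le_tCost (map_inner_mem_Coupling hθ hπ)

end Projection

/-! ### Wasserstein means of measures on a line -/

section Mean

variable {E : Type*} [NormedAddCommGroup E] [InnerProductSpace ℝ E] [MeasurableSpace E]
  [BorelSpace E] [SecondCountableTopology E] {ν₁ ν₂ : Measure ℝ} {μ : Measure E} {θ : E}

lemma map_quantileMean_smul_mem_P2 (h₁ : ν₁ ∈ P2) (h₂ : ν₂ ∈ P2) (θ : E) :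
    unitLebesgue.map (fun t => quantileMean ν₁ ν₂ t • θ) ∈ P2 := by
  have hm := memLp_quantileMean h₁ h₂
  exact (map_mem_P2_iff_memLp (hm.aemeasurable.smul_const θ)).2 ((memLp_top_const θ).smul hm)

lemma W2sq_map_quantileMean_smul_add_le (hθ : ‖θ‖ = 1) (h₁ : ν₁ ∈ P2) (h₂ : ν₂ ∈ P2) :
    W2sq (ν₁.map fun c => c • θ) (unitLebesgue.map fun t => quantileMean ν₁ ν₂ t • θ)
        + W2sq (unitLebesgue.map fun t => quantileMean ν₁ ν₂ t • θ) (ν₂.map fun c => c • θ)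
      ≤ 1 / 2 * W2sq ν₁ ν₂ := by
  have := h₁.1
  have := h₂.1
  have midpoint_le := W2sq_map_midpoint_add_le ((aemeasurable_quantile ν₁).smul_const θ)
    ((aemeasurable_quantile ν₂).smul_const θ)
  simp_rw [map_quantile_smul, ← quantileMean_smul_eq_midpoint, ← sub_smul, norm_smul, hθ,
    mul_one, Real.norm_eq_abs, sq_abs] at midpoint_le
  rwa [W2sq_eq_integral_quantile h₁ h₂]

lemma le_W2sq_map_smul_add_W2sq_map_smul (hθ : ‖θ‖ = 1) (h₁ : ν₁ ∈ P2) (h₂ : ν₂ ∈ P2)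
    (hμ : μ ∈ P2) :
    1 / 2 * W2sq ν₁ ν₂ + 2 * ((∫ t, (quantile (μ.map fun x => ⟪θ, x⟫) t
        - quantileMean ν₁ ν₂ t) ^ 2 ∂unitLebesgue) + ∫ y, ‖y - ⟪θ, y⟫ • θ‖ ^ 2 ∂μ)
      ≤ W2sq (ν₁.map fun c => c • θ) μ + W2sq μ (ν₂.map fun c => c • θ) := by
  have lower₁ := W2sq_map_inner_add_le hθ h₁ hμ
  have lower₂ := W2sq_map_inner_add_le hθ h₂ hμ
  rw [W2sq_comm ν₂, W2sq_comm _ μ] at lower₂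
  linarith [W2sq_add_W2sq_eq h₁ h₂ (map_inner_mem_P2 hμ θ)]

lemma eq_map_smul_of_integral_eq_zero (hμ : μ ∈ P2) {g : ℝ → ℝ} (hg : MemLp g 2 unitLebesgue)
    (hquantile : ∫ t, (quantile (μ.map fun x => ⟪θ, x⟫) t - g t) ^ 2 ∂unitLebesgue = 0)
    (hline : ∫ y, ‖y - ⟪θ, y⟫ • θ‖ ^ 2 ∂μ = 0) :
    μ = unitLebesgue.map fun t => g t • θ := by
  have hρ := map_inner_mem_P2 hμ θ
  have := hρ.1
  have quantile_ae_eq : quantile (μ.map fun x => ⟪θ, x⟫) =ᵐ[unitLebesgue] g := by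
    have hzero := (integral_eq_zero_iff_of_nonneg (fun _ => sq_nonneg _)
      ((memLp_quantile hρ).sub hg).integrable_sq).1 hquantile
    filter_upwards [hzero] with t ht using sub_eq_zero.1 (pow_eq_zero_iff two_ne_zero |>.1 ht)
  have ae_mem_line : (fun y => y) =ᵐ[μ] fun y => ⟪θ, y⟫ • θ := by
    have hzero := (integral_eq_zero_iff_of_nonneg (fun _ => by positivity)
      ((memLp_sub_inner_smul hμ θ).integrable_norm_pow two_ne_zero)).1 hline
    filter_upwards [hzero] with y hy
    exact sub_eq_zero.1 (norm_eq_zero.1 (pow_eq_zero_iff two_ne_zero |>.1 hy))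
  calc μ = μ.map fun y => y := Measure.map_id'.symm
    _ = μ.map fun y => ⟪θ, y⟫ • θ := Measure.map_congr ae_mem_line
    _ = (μ.map fun x => ⟪θ, x⟫).map fun c => c • θ := map_inner_smul θ μ
    _ = unitLebesgue.map fun t => quantile (μ.map fun x => ⟪θ, x⟫) t • θ :=
      (map_quantile_smul _ θ).symm
    _ = unitLebesgue.map fun t => g t • θ :=
      Measure.map_congr (quantile_ae_eq.fun_comp (· • θ))

end Mean

theorem WMean_proj_singleton_general {d : ℕ} {ν₁ ν₂ : Measure ℝ} (h₁ : ν₁ ∈ P2) (h₂ : ν₂ ∈ P2)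
    {θ : Euc d} (hθ : ‖θ‖ = 1) :
    WMean (ν₁.map fun c => c • θ) (ν₂.map fun c => c • θ)
      = {unitLebesgue.map fun t => quantileMean ν₁ ν₂ t • θ} := by
  have mean_mem := map_quantileMean_smul_mem_P2 h₁ h₂ θ
  have upper := W2sq_map_quantileMean_smul_add_le hθ h₁ h₂
  have quantile_term_nonneg (μ : Measure (Euc d)) : 0 ≤ ∫ t, (quantile (μ.map fun x => ⟪θ, x⟫) t
      - quantileMean ν₁ ν₂ t) ^ 2 ∂unitLebesgue := integral_nonneg fun _ => sq_nonneg _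
  have line_term_nonneg (μ : Measure (Euc d)) : 0 ≤ ∫ y, ‖y - ⟪θ, y⟫ • θ‖ ^ 2 ∂μ :=
    integral_nonneg fun _ => sq_nonneg _
  have lower {μ : Measure (Euc d)} (hμ : μ ∈ P2) :=
    le_W2sq_map_smul_add_W2sq_map_smul hθ h₁ h₂ hμ
  refine Set.Subset.antisymm (fun μ ⟨hμ, hmin⟩ => ?_)
    (Set.singleton_subset_iff.2 ⟨mean_mem, fun μ hμ => ?_⟩)
  · have := hmin _ mean_mem
    exact eq_map_smul_of_integral_eq_zero hμ (memLp_quantileMean h₁ h₂)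
      (by linarith [lower hμ, quantile_term_nonneg μ, line_term_nonneg μ])
      (by linarith [lower hμ, quantile_term_nonneg μ, line_term_nonneg μ])
  · linarith [lower hμ, quantile_term_nonneg μ, line_term_nonneg μ]

/-- the Wasserstein mean of the projected measures `Q_θ#μ1` and `Q_θ#μ2`
is unique and given by the explicit quantile formula `pivotMiddle θ μ1 μ2`. -/
theorem WMean_proj_singleton {d : ℕ} (μ1 μ2 : Measure (Euc d))
    (h1 : μ1 ∈ (P2 : Set (Measure (Euc d)))) (h2 : μ2 ∈ (P2 : Set (Measure (Euc d))))
    (θ : Euc d) (hθ : ‖θ‖ = 1) :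
    WMean (μ1.map (fun x => ⟪θ, x⟫ • θ)) (μ2.map (fun x => ⟪θ, x⟫ • θ))
      = {pivotMiddle θ μ1 μ2} := by
  rw [map_inner_smul, map_inner_smul]
  exact WMean_proj_singleton_general (map_inner_mem_P2 h1 θ) (map_inner_mem_P2 h2 θ) hθ

end
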